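/- Let R : [0,T] × ℝⁿ × ℝ → ℝ and G : ℝⁿ → ℝ, and let v_s = (x_s, u_s) and v_{s+1} = (x_{s+1}, u_{s+1}) be two processes of the system x' = f(t,x,u), x(0) = x₀. Suppose: (i) R(t, x_s(t), u_s(t)) = min_x R(t, x, u_s(t)) for all t ∈ (0,T); (ii) G(x_s(T)) = max_x G(x); (iii) u_{s+1}(t) ∈ Argmax_u R(t, x_{s+1}(t), u) for all t. If I and L coincide on admissible processes with L(x;u) = −∫₀ᵀ R(t,x(t),u(t)) dt + G(x(T)), then I(v_s) − I(v_{s+1}) = ∫₀ᵀ [R(t, x_{s+1}, u_{s+1}) − R(t, x_{s+1}, u_s)] dt + ∫₀ᵀ [R(t, x_{s+1}, u_s) − R(t, x_s, u_s)] dt + G(x_s(T)) − G(x_{s+1}(T)), and this quantity is nonnegative; hence the global improvement step does not increase the cost functional. -/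

import Mathlib

open Set intervalIntegral

/-- **improvement property of the global method.** Suppose the cost `I`
satisfies the Krotov representation `I(x;u) = −∫₀ᵀ R(t,x,u) dt + G(x(T))` on admissible
processes, `(x_s,u_s)` minimizes `x ↦ R(t,x,u_s(t))` pointwise and maximizes `G` at `x_s(T)`,
and `u_{s+1}(t)` maximizes `u ↦ R(t,x_{s+1}(t),u)`. Then the decrement
`I(v_s) − I(v_{s+1})` equals the stated sum of integrals and terminal terms and is
nonnegative. -/
theorem global_improvement_step_nonneg
    {n : ℕ} (T : ℝ) (hT : 0 < T)
    (f : ℝ → EuclideanSpace ℝ (Fin n) → ℝ → EuclideanSpace ℝ (Fin n))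
    (x₀ : EuclideanSpace ℝ (Fin n))
    (I : (ℝ → EuclideanSpace ℝ (Fin n)) → (ℝ → ℝ) → ℝ)
    (R : ℝ → EuclideanSpace ℝ (Fin n) → ℝ → ℝ)
    (G : EuclideanSpace ℝ (Fin n) → ℝ)
    (hIL : ∀ (x : ℝ → EuclideanSpace ℝ (Fin n)) (u : ℝ → ℝ),
      ((∀ t ∈ Icc (0 : ℝ) T, HasDerivAt x (f t (x t) (u t)) t) ∧ x 0 = x₀) →
      I x u = -(∫ t in (0 : ℝ)..T, R t (x t) (u t)) + G (x T))
    (xs xs1 : ℝ → EuclideanSpace ℝ (Fin n)) (us us1 : ℝ → ℝ)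
    (hsol_s : (∀ t ∈ Icc (0 : ℝ) T, HasDerivAt xs (f t (xs t) (us t)) t) ∧ xs 0 = x₀)
    (hsol_s1 : (∀ t ∈ Icc (0 : ℝ) T, HasDerivAt xs1 (f t (xs1 t) (us1 t)) t) ∧ xs1 0 = x₀)
    -- (i): `x_s(t)` minimizes `x ↦ R(t, x, u_s(t))` for `t ∈ (0,T)`
    (hRmin : ∀ t ∈ Ioo (0 : ℝ) T, ∀ v, R t (xs t) (us t) ≤ R t v (us t))
    -- (ii): `x_s(T)` maximizes `G`
    (hGmax : ∀ v, G v ≤ G (xs T))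
    -- (iii): `u_{s+1}(t)` maximizes `u ↦ R(t, x_{s+1}(t), u)` for all `t`
    (hUmax : ∀ t, ∀ a : ℝ, R t (xs1 t) a ≤ R t (xs1 t) (us1 t))
    (hint1 : IntervalIntegrable (fun t => R t (xs1 t) (us1 t)) MeasureTheory.volume 0 T)
    (hint2 : IntervalIntegrable (fun t => R t (xs1 t) (us t)) MeasureTheory.volume 0 T)
    (hint3 : IntervalIntegrable (fun t => R t (xs t) (us t)) MeasureTheory.volume 0 T) :
    I xs us - I xs1 us1 =
      (∫ t in (0 : ℝ)..T, (R t (xs1 t) (us1 t) - R t (xs1 t) (us t))) +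
      (∫ t in (0 : ℝ)..T, (R t (xs1 t) (us t) - R t (xs t) (us t))) +
      G (xs T) - G (xs1 T) ∧
    0 ≤ I xs us - I xs1 us1 := by
  have hdecomp : I xs us - I xs1 us1 =
      (∫ t in (0 : ℝ)..T, (R t (xs1 t) (us1 t) - R t (xs1 t) (us t))) +
      (∫ t in (0 : ℝ)..T, (R t (xs1 t) (us t) - R t (xs t) (us t))) +
      G (xs T) - G (xs1 T) := by
    rw [hIL xs us hsol_s, hIL xs1 us1 hsol_s1, integral_sub hint1 hint2,
      integral_sub hint2 hint3]
    ring
  have hcontrol : 0 ≤ ∫ t in (0 : ℝ)..T, (R t (xs1 t) (us1 t) - R t (xs1 t) (us t)) :=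
    integral_nonneg hT.le fun t _ => sub_nonneg.2 (hUmax t (us t))
  have hstate : 0 ≤ ∫ t in (0 : ℝ)..T, (R t (xs1 t) (us t) - R t (xs t) (us t)) := by
    rw [integral_sub hint2 hint3, sub_nonneg]
    exact integral_mono_on_of_le_Ioo hT.le hint3 hint2 fun t ht => hRmin t ht (xs1 t)
  refine ⟨hdecomp, ?_⟩
  linarith [hGmax (xs1 T)]
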